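/- There exists a constant C > 0 such that for all n ≥ 2, every capped graph on n vertices admits a biclique cover of size at most C · n · (log₂ n)³. -/

import Mathlib

/-- A biclique cover of a simple graph `G`: a finite family of pairs of disjoint
vertex sets `(A i, B i)` such that every pair in `A i × B i` is an edge of `G`,
and every edge of `G` is covered by at least one biclique. -/
def IsBicliqueCover {V : Type*} (G : SimpleGraph V) {m : ℕ}
    (A B : Fin m → Finset V) : Prop :=
  (∀ i, Disjoint (A i) (B i)) ∧
  (∀ i, ∀ a ∈ A i, ∀ b ∈ B i, G.Adj a b) ∧
  (∀ u v, G.Adj u v → ∃ i, (u ∈ A i ∧ v ∈ B i) ∨ (v ∈ A i ∧ u ∈ B i))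

/-- A biclique partition: a biclique cover in which every edge is covered by
exactly one biclique. -/
def IsBicliquePartition {V : Type*} (G : SimpleGraph V) {m : ℕ}
    (A B : Fin m → Finset V) : Prop :=
  (∀ i, Disjoint (A i) (B i)) ∧
  (∀ i, ∀ a ∈ A i, ∀ b ∈ B i, G.Adj a b) ∧
  (∀ u v, G.Adj u v → ∃! i, (u ∈ A i ∧ v ∈ B i) ∨ (v ∈ A i ∧ u ∈ B i))

/-- The size of a biclique cover: the sum of `|A i| + |B i|`. -/
def coverSize {V : Type*} {m : ℕ} (A B : Fin m → Finset V) : ℕ :=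
  ∑ i, ((A i).card + (B i).card)

/-!
A relation is difunctional when it is a disjoint union of rectangles `A × B`, so if the forward
edges `u < v` of a graph on `n` vertices are a union of `k` difunctional relations, then the graph
has a biclique cover of size at most `2 k n`. A Ferrers relation, one whose rows are nested, is a
threshold relation `f x < g y` with `g ≤ n`; splitting by the top bit in which `f x` and `g y`
differ makes it a union of about `log₂ n` difunctional relations.

The order `<` is itself Ferrers. On a difunctional part `D` of it, a capped graph is the
intersection of two Ferrers relations: `u` has a neighbour `k ≤ v` with `D u k`, and `v` has a
neighbour `j ≥ u` with `D j v`. Indeed difunctionality gives `D j k`, so `u ≤ j < k ≤ v`, and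
cappedness yields the edge `uv`. The three Ferrers relations account for the three logarithms.
-/

open Finset

variable {α β V : Type*}

/-- A relation is difunctional if it is a disjoint union of rectangles: two rows that meet are
equal. -/
def IsDifunctional (r : α → β → Prop) : Prop :=
  ∀ ⦃x x' y y'⦄, r x y → r x' y → r x' y' → r x y'

lemma IsDifunctional.and {r s : α → β → Prop} (hr : IsDifunctional r) (hs : IsDifunctional s) :
    IsDifunctional fun x y ↦ r x y ∧ s x y :=
  fun _ _ _ _ h₁ h₂ h₃ ↦ ⟨hr h₁.1 h₂.1 h₃.1, hs h₁.2 h₂.2 h₃.2⟩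

lemma IsDifunctional.comap {α' β' : Type*} {r : α → β → Prop} (hr : IsDifunctional r)
    (f : α' → α) (g : β' → β) : IsDifunctional fun x y ↦ r (f x) (g y) :=
  fun _ _ _ _ h₁ h₂ h₃ ↦ hr h₁ h₂ h₃

lemma sum_card_le_card_of_pairwise_disjoint {ι : Type*} [Fintype ι] [Fintype α]
    {A : ι → Finset α} (hA : Pairwise fun i j ↦ Disjoint (A i) (A j)) :
    ∑ i, #(A i) ≤ Fintype.card α := by
  classical
  rw [← card_biUnion fun i _ j _ hij ↦ hA hij]
  exact card_le_univ _

lemma IsDifunctional.exists_rectangles [Fintype α] [Fintype β] {r : α → β → Prop}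
    (hr : IsDifunctional r) :
    ∃ (A : Set β → Finset α) (B : Set β → Finset β),
      (∀ x y, r x y ↔ ∃ s, x ∈ A s ∧ y ∈ B s) ∧
      ∑ s, #(A s) ≤ Fintype.card α ∧ ∑ s, #(B s) ≤ Fintype.card β := by
  classical
  let A (s : Set β) : Finset α := {x | {y | r x y} = s}
  let B (s : Set β) : Finset β := {y | ∃ x, {y | r x y} = s ∧ r x y}
  have mem_A {x s} : x ∈ A s ↔ {y | r x y} = s := mem_filter_univ x
  have mem_B {y s} : y ∈ B s ↔ ∃ x, {y | r x y} = s ∧ r x y := mem_filter_univ y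
  refine ⟨A, B, fun x y ↦ ⟨fun hxy ↦ ?_, ?_⟩, ?_, ?_⟩
  · exact ⟨_, mem_A.2 rfl, mem_B.2 ⟨x, rfl, hxy⟩⟩
  · rintro ⟨s, hx, hy⟩
    obtain ⟨x', hx', hx'y⟩ := mem_B.1 hy
    have hrow : {y | r x y} = {y | r x' y} := (mem_A.1 hx).trans hx'.symm
    exact hrow.ge hx'y
  · refine sum_card_le_card_of_pairwise_disjoint fun s s' hss' ↦ disjoint_left.2 fun x hx hx' ↦ ?_
    exact hss' ((mem_A.1 hx).symm.trans (mem_A.1 hx'))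
  · refine sum_card_le_card_of_pairwise_disjoint fun s s' hss' ↦ disjoint_left.2 fun y hy hy' ↦ ?_
    obtain ⟨x, rfl, hxy⟩ := mem_B.1 hy
    obtain ⟨x', rfl, hx'y⟩ := mem_B.1 hy'
    exact hss' (Set.ext fun z ↦ ⟨fun hxz ↦ hr hx'y hxy hxz, fun hx'z ↦ hr hxy hx'y hx'z⟩)

lemma exists_isBicliqueCover_of_fintype {κ : Type*} [Fintype κ] {G : SimpleGraph V}
    (A B : κ → Finset V) (hadj : ∀ i, ∀ a ∈ A i, ∀ b ∈ B i, G.Adj a b)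
    (hcover : ∀ u v, G.Adj u v → ∃ i, (u ∈ A i ∧ v ∈ B i) ∨ (v ∈ A i ∧ u ∈ B i)) :
    ∃ (m : ℕ) (A' B' : Fin m → Finset V), IsBicliqueCover G A' B' ∧
      coverSize A' B' = ∑ i, (#(A i) + #(B i)) := by
  let e := (Fintype.equivFin κ).symm
  refine ⟨Fintype.card κ, A ∘ e, B ∘ e, ⟨fun i ↦ ?_, fun i ↦ hadj (e i), fun u v huv ↦ ?_⟩,
    e.sum_comp fun i ↦ #(A i) + #(B i)⟩
  · exact disjoint_left.2 fun v hA hB ↦ G.irrefl (hadj (e i) v hA v hB)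
  · exact e.surjective.exists.1 (hcover u v huv)

lemma exists_isBicliqueCover_of_isDifunctional {ι : Type*} [Fintype ι] [Fintype V]
    {G : SimpleGraph V} {D : ι → V → V → Prop} (hD : ∀ i, IsDifunctional (D i))
    (hadj : ∀ u v, G.Adj u v ↔ ∃ i, D i u v ∨ D i v u) :
    ∃ (m : ℕ) (A B : Fin m → Finset V), IsBicliqueCover G A B ∧
      coverSize A B ≤ 2 * (Fintype.card ι * Fintype.card V) := by
  classical
  choose A B hAB hA hB using fun i ↦ (hD i).exists_rectangles
  obtain ⟨m, A', B', hcover, hsize⟩ := exists_isBicliqueCover_of_fintype (G := G)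
    (fun p : ι × Set V ↦ A p.1 p.2) (fun p ↦ B p.1 p.2)
    (fun p u hu v hv ↦ (hadj u v).2 ⟨p.1, .inl ((hAB p.1 u v).2 ⟨p.2, hu, hv⟩)⟩)
    (fun u v huv ↦ by simpa only [hAB, ← exists_or, ← Prod.exists'] using (hadj u v).1 huv)
  refine ⟨m, A', B', hcover, ?_⟩
  calc coverSize A' B'
      = ∑ i, (∑ s, #(A i s) + ∑ s, #(B i s)) := by
        simp only [hsize, Fintype.sum_prod_type, sum_add_distrib]
    _ ≤ ∑ _i : ι, (Fintype.card V + Fintype.card V) := by gcongr with i; exacts [hA i, hB i]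
    _ = 2 * (Fintype.card ι * Fintype.card V) := by
        rw [sum_const, card_univ, smul_eq_mul]; ring

/-- The numbers `x` and `y` lie in the sibling dyadic blocks number `2 * c` and `2 * c + 1` of
length `2 ^ t`, for some `c`; that is, `x < y` and their top differing bit is bit `t`. -/
def DyadicSplit (t x y : ℕ) : Prop :=
  Even (x / 2 ^ t) ∧ y / 2 ^ t = x / 2 ^ t + 1

lemma isDifunctional_dyadicSplit (t : ℕ) : IsDifunctional (DyadicSplit t) := by
  rintro x x' y y' ⟨hx, hxy⟩ ⟨-, hx'y⟩ ⟨-, hx'y'⟩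
  exact ⟨hx, by omega⟩

lemma DyadicSplit.lt {t x y : ℕ} (h : DyadicSplit t x y) : x < y :=
  Nat.lt_of_div_lt_div (c := 2 ^ t) (h.2 ▸ Nat.lt_succ_self _)

lemma exists_dyadicSplit_of_lt {K : ℕ} :
    ∀ {x y : ℕ}, x < y → y < 2 ^ K → ∃ t < K, DyadicSplit t x y := by
  induction K with
  | zero => intro x y hxy hy; omega
  | succ K ih =>
    intro x y hxy hy
    by_cases hhalf : x / 2 < y / 2
    · obtain ⟨t, ht, hsplit⟩ := ih hhalf (by omega)
      refine ⟨t + 1, by omega, ?_⟩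
      simpa only [DyadicSplit, pow_succ', ← Nat.div_div_eq_div_mul] using hsplit
    · refine ⟨0, by omega, ?_⟩
      simp only [DyadicSplit, pow_zero, Nat.div_one, Nat.even_iff]
      omega

/-- A Ferrers relation (also called a chain graph, as a bipartite graph): its rows are linearly
ordered by inclusion. -/
def IsFerrers (r : α → β → Prop) : Prop :=
  ∀ ⦃x x' y y'⦄, r x y → r x' y' → r x y' ∨ r x' y

lemma isFerrers_lt [LinearOrder V] : IsFerrers ((· < ·) : V → V → Prop) :=
  fun _ _ y y' h h' ↦ (le_total y y').imp h.trans_le h'.trans_le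

lemma isFerrers_exists_le [LinearOrder β] (p : α → β → Prop) :
    IsFerrers fun x y ↦ ∃ k ≤ y, p x k := by
  rintro x x' y y' ⟨k, hk, hp⟩ ⟨k', hk', hp'⟩
  exact (le_total y y').imp (fun h ↦ ⟨k, hk.trans h, hp⟩) fun h ↦ ⟨k', hk'.trans h, hp'⟩

lemma isFerrers_exists_ge [LinearOrder α] (p : α → β → Prop) :
    IsFerrers fun x y ↦ ∃ j ≥ x, p j y := by
  rintro x x' y y' ⟨j, hj, hp⟩ ⟨j', hj', hp'⟩
  exact (le_total x x').imp (fun h ↦ ⟨j', h.trans hj', hp'⟩) fun h ↦ ⟨j, h.trans hj, hp⟩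

lemma IsFerrers.exists_threshold [Fintype α] {r : α → β → Prop} (hr : IsFerrers r) :
    ∃ (f : α → ℕ) (g : β → ℕ), (∀ y, g y ≤ Fintype.card α) ∧ ∀ x y, r x y ↔ f x < g y := by
  classical
  let above (x : α) : Finset α := {x' | {y | r x y} ⊂ {y | r x' y}}
  let column (y : β) : Finset α := {x | r x y}
  have mem_above {x x'} : x' ∈ above x ↔ {y | r x y} ⊂ {y | r x' y} := mem_filter_univ x'
  have mem_column {x y} : x ∈ column y ↔ r x y := mem_filter_univ x
  refine ⟨fun x ↦ #(above x), fun y ↦ #(column y), fun y ↦ card_le_univ _, fun x y ↦ ?_⟩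
  constructor
  · intro hxy
    refine card_lt_card ((ssubset_iff_of_subset fun x' hx' ↦ ?_).2 ⟨x, mem_column.2 hxy, ?_⟩)
    · exact mem_column.2 ((mem_above.1 hx').subset hxy)
    · exact fun hx ↦ (mem_above.1 hx).ne rfl
  · contrapose!
    refine fun hxy ↦ card_le_card fun x' hx' ↦ mem_above.2 ?_
    have hx'y : r x' y := mem_column.1 hx'
    exact ⟨fun z hxz ↦ (hr hxz hx'y).resolve_left hxy, fun hsub ↦ hxy (hsub hx'y)⟩

lemma IsFerrers.exists_isDifunctional [Fintype α] {r : α → β → Prop} (hr : IsFerrers r) {K : ℕ}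
    (hK : Fintype.card α < 2 ^ K) :
    ∃ D : Fin K → α → β → Prop, (∀ t, IsDifunctional (D t)) ∧ ∀ x y, r x y ↔ ∃ t, D t x y := by
  obtain ⟨f, g, hg, hfg⟩ := hr.exists_threshold
  refine ⟨fun t x y ↦ DyadicSplit t (f x) (g y),
    fun t ↦ (isDifunctional_dyadicSplit t).comap f g, fun x y ↦ (hfg x y).trans ⟨fun h ↦ ?_, ?_⟩⟩
  · obtain ⟨t, ht, hsplit⟩ := exists_dyadicSplit_of_lt h ((hg y).trans_lt hK)
    exact ⟨⟨t, ht⟩, hsplit⟩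
  · exact fun ⟨_, hsplit⟩ ↦ hsplit.lt

lemma natLog_add_one_le_two_mul_logb {n : ℕ} (hn : 2 ≤ n) :
    (Nat.log 2 n + 1 : ℝ) ≤ 2 * Real.logb 2 n := by
  have hlog : (Nat.log 2 n : ℝ) ≤ Real.logb 2 n := mod_cast Real.natLog_le_logb n 2
  have hone : (1 : ℝ) ≤ Nat.log 2 n := mod_cast Nat.log_pos one_lt_two hn
  linarith

section Capped

variable [LinearOrder V] {G : SimpleGraph V}

/-- A graph on a linearly ordered vertex set is capped if any two crossing edges `ik` and `jl`,
with `i < j < k < l`, force the outer edge `il`. -/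
def IsCapped (G : SimpleGraph V) : Prop :=
  ∀ i j k l, i < j → j < k → k < l → G.Adj i k → G.Adj j l → G.Adj i l

lemma IsCapped.adj_of_le_of_lt_of_le (hG : IsCapped G) {i j k l : V} (hij : i ≤ j) (hjk : j < k)
    (hkl : k ≤ l) (hik : G.Adj i k) (hjl : G.Adj j l) : G.Adj i l := by
  obtain rfl | hij := hij.eq_or_lt
  · exact hjl
  obtain rfl | hkl := hkl.eq_or_lt
  · exact hik
  exact hG i j k l hij hjk hkl hik hjl

lemma IsCapped.adj_iff_of_isDifunctional (hG : IsCapped G) {D : V → V → Prop}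
    (hD : IsDifunctional D) (hlt : ∀ u v, D u v → u < v) {u v : V} (huv : D u v) :
    G.Adj u v ↔ (∃ k ≤ v, D u k ∧ G.Adj u k) ∧ ∃ j ≥ u, D j v ∧ G.Adj j v := by
  constructor
  · exact fun h ↦ ⟨⟨v, le_rfl, huv, h⟩, ⟨u, le_rfl, huv, h⟩⟩
  · rintro ⟨⟨k, hkv, huk, hadj_uk⟩, ⟨j, huj, hjv, hadj_jv⟩⟩
    have hjk : j < k := hlt j k (hD hjv huv huk)
    exact hG.adj_of_le_of_lt_of_le huj hjk hkv hadj_uk hadj_jv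

lemma IsCapped.exists_isDifunctional [Fintype V] (hG : IsCapped G) {K : ℕ}
    (hK : Fintype.card V < 2 ^ K) :
    ∃ D : Fin K × Fin K × Fin K → V → V → Prop, (∀ p, IsDifunctional (D p)) ∧
      ∀ u v, u < v ∧ G.Adj u v ↔ ∃ p, D p u v := by
  obtain ⟨L, hL, hlt⟩ := (isFerrers_lt (V := V)).exists_isDifunctional hK
  choose P hP hPiff using fun t ↦
    (isFerrers_exists_le fun u k ↦ L t u k ∧ G.Adj u k).exists_isDifunctional hK
  choose Q hQ hQiff using fun t ↦
    (isFerrers_exists_ge fun j v ↦ L t j v ∧ G.Adj j v).exists_isDifunctional hK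
  refine ⟨fun p u v ↦ L p.1 u v ∧ P p.1 p.2.1 u v ∧ Q p.1 p.2.2 u v,
    fun p ↦ (hL _).and ((hP _ _).and (hQ _ _)), fun u v ↦ ?_⟩
  have hadj {t} (huv : L t u v) : G.Adj u v ↔ (∃ a, P t a u v) ∧ ∃ b, Q t b u v := by
    rw [hG.adj_iff_of_isDifunctional (hL t) (fun x y hxy ↦ (hlt x y).2 ⟨t, hxy⟩) huv,
      hPiff, hQiff]
  constructor
  · rintro ⟨huv, huv_adj⟩
    obtain ⟨t, ht⟩ := (hlt u v).1 huv
    obtain ⟨⟨a, ha⟩, b, hb⟩ := (hadj ht).1 huv_adj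
    exact ⟨(t, a, b), ht, ha, hb⟩
  · rintro ⟨⟨t, a, b⟩, ht, ha, hb⟩
    exact ⟨(hlt u v).2 ⟨t, ht⟩, (hadj ht).2 ⟨⟨a, ha⟩, b, hb⟩⟩

lemma IsCapped.exists_isBicliqueCover [Fintype V] (hG : IsCapped G) {K : ℕ}
    (hK : Fintype.card V < 2 ^ K) :
    ∃ (m : ℕ) (A B : Fin m → Finset V), IsBicliqueCover G A B ∧
      coverSize A B ≤ 2 * (K ^ 3 * Fintype.card V) := by
  obtain ⟨D, hD, hadj⟩ := hG.exists_isDifunctional hK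
  have hcard : Fintype.card (Fin K × Fin K × Fin K) = K ^ 3 := by
    simp only [Fintype.card_prod, Fintype.card_fin]; ring
  rw [← hcard]
  refine exists_isBicliqueCover_of_isDifunctional hD fun u v ↦ ?_
  rw [exists_or, ← hadj, ← hadj, G.adj_comm v u, ← or_and_right]
  exact ⟨fun h ↦ ⟨h.ne.lt_or_gt, h⟩, And.right⟩

theorem stmt_9_general [Fintype V] (hV : 2 ≤ Fintype.card V) (hG : IsCapped G) :
    ∃ (m : ℕ) (A B : Fin m → Finset V), IsBicliqueCover G A B ∧
      (coverSize A B : ℝ) ≤ 16 * Fintype.card V * Real.logb 2 (Fintype.card V) ^ 3 := by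
  obtain ⟨m, A, B, hcover, hsize⟩ :=
    hG.exists_isBicliqueCover (Nat.lt_pow_succ_log_self one_lt_two _)
  refine ⟨m, A, B, hcover, ?_⟩
  calc (coverSize A B : ℝ)
      ≤ 2 * ((Nat.log 2 (Fintype.card V) + 1) ^ 3 * Fintype.card V) := mod_cast hsize
    _ ≤ 2 * ((2 * Real.logb 2 (Fintype.card V)) ^ 3 * Fintype.card V) := by
        gcongr; exact natLog_add_one_le_two_mul_logb hV
    _ = 16 * Fintype.card V * Real.logb 2 (Fintype.card V) ^ 3 := by ring

end Capped

/-- Every capped graph on `n` vertices admits a biclique cover of size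
`O(n (log₂ n)³)`. -/
theorem stmt_9 :
    ∃ C : ℝ, 0 < C ∧ ∀ n : ℕ, 2 ≤ n → ∀ G : SimpleGraph (Fin n),
      (∀ i j k l : Fin n, i < j → j < k → k < l →
        G.Adj i k → G.Adj j l → G.Adj i l) →
      ∃ (m : ℕ) (A B : Fin m → Finset (Fin n)),
        IsBicliqueCover G A B ∧
        (coverSize A B : ℝ) ≤ C * (n : ℝ) * (Real.logb 2 n) ^ 3 := by
  refine ⟨16, by norm_num, fun n hn G hG ↦ ?_⟩
  simpa only [Fintype.card_fin] using stmt_9_general (by rwa [Fintype.card_fin]) hG
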